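/- Let F be a field, f ∈ F[x] nonconstant with f' ≠ 0, t transcendental over F, α a root of φ = f − t, L the splitting field of φ over F(t), and G = Gal(L/F(t)) acting on the set Z of roots of φ. Let B_α be the set of roots of φ lying in F(α), and let H be the group (under functional composition) of degree-1 polynomials ℓ ∈ F[x] with f ∘ ℓ = f. Then B_α = {ℓ(α) : ℓ ∈ H}, and the map Φ from the setwise stabilizer G_{B_α} to H, sending σ to ℓ⁻¹ where ℓ ∈ H is the unique element with σ(α) = ℓ(α), is a surjective group homomorphism with kernel G_α. -/

import Mathlib

/-! The relation `f(α) = t` makes `α` transcendental over `F` (otherwise `t` would be algebraic), so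
substituting `α` for the variable embeds `F(x)` into `L`, and the image of this embedding contains
both `F(t)` and `α`, hence `F(t)(α)`. A root `β` of `φ` in `F(t)(α)` is therefore `r(α)` for a
rational function `r` with `f(r) = f(x)`; as `r` is integral over the integrally closed ring `F[x]`,
it is a polynomial, and comparing degrees in `f ∘ r = f` gives `deg r = 1`
(`exists_degree_one_of_mem_adjoin`).

For surjectivity, any two roots of `φ` are conjugate over `F(t)` (`minpoly_eq_of_root`): if `α` and
`β` are roots, then for `p ∈ F(t)[x]` the values `p(α)` and `p(β)` are the images of one and the same
rational function under the two embeddings `x ↦ α` and `x ↦ β`, so they vanish together. Normality of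
`L` over `F(t)` then supplies an automorphism taking `α` to `ℓ⁻¹(α)`. The remaining claims are formal
consequences of the injectivity of evaluation at `α`. -/

open Polynomial

/-- For `f ∈ F[x]`, the polynomial `φ = f − t` over the rational function field
`F(t) = RatFunc F` (with `t = RatFunc.X`). -/
noncomputable abbrev polyPhi {F : Type*} [Field F] (f : F[X]) : Polynomial (RatFunc F) :=
  f.map (algebraMap F (RatFunc F)) - Polynomial.C RatFunc.X

section Helpers

variable {F L : Type*} [Field F] [Field L] [Algebra F L]

/-- Evaluation of rational functions over `F` at an element transcendental over `F`. -/
noncomputable def evalTrans {β : L} (hβ : Transcendental F β) : RatFunc F →ₐ[F] L :=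
  RatFunc.liftAlgHom (aeval β)
    (nonZeroDivisors_le_comap_nonZeroDivisors_of_injective _
      (transcendental_iff_injective.mp hβ))

theorem evalTrans_algebraMap {β : L} (hβ : Transcendental F β) (p : F[X]) :
    evalTrans hβ (algebraMap F[X] (RatFunc F) p) = aeval β p := by
  have h := RatFunc.liftAlgHom_apply_div (aeval β)
    (nonZeroDivisors_le_comap_nonZeroDivisors_of_injective _
      (transcendental_iff_injective.mp hβ)) p 1
  rwa [map_one, map_one, div_one, div_one] at h

variable [Algebra (RatFunc F) L] [IsScalarTower F (RatFunc F) L]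

theorem aeval_polyPhi_eq_zero_iff (f : F[X]) (β : L) :
    aeval β (polyPhi f) = 0 ↔ aeval β f = algebraMap (RatFunc F) L RatFunc.X := by
  rw [polyPhi, map_sub, aeval_map_algebraMap, aeval_C, sub_eq_zero]

/-- A root of `f - t` is transcendental over `F`, because `t` is. -/
theorem transcendental_of_root {f : F[X]} {β : L}
    (h : aeval β f = algebraMap (RatFunc F) L RatFunc.X) : Transcendental F β := by
  intro hβ
  have h1 : IsAlgebraic F (algebraMap (RatFunc F) L RatFunc.X) := by
    have hi : IsIntegral F β := IsAlgebraic.isIntegral hβ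
    rw [← h]
    exact (IsIntegral.of_mem_of_fg _ hi.fg_adjoin_singleton _
      (aeval_mem_adjoin_singleton F β)).isAlgebraic
  exact RatFunc.transcendental_X
    ((isAlgebraic_algebraMap_iff (algebraMap (RatFunc F) L).injective).mp h1)

/-- A rational function in `t` is a rational function in any root `β` of `f - t`, namely its
composition with `f`. The composition is itself written as evaluation at `f`, so that it does not
depend on `β`. -/
theorem evalTrans_comp {f : F[X]} {β : L}
    (h : aeval β f = algebraMap (RatFunc F) L RatFunc.X)
    (hf : Transcendental F (algebraMap F[X] (RatFunc F) f)) (r : RatFunc F) :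
    evalTrans (transcendental_of_root h) (evalTrans hf r) = algebraMap (RatFunc F) L r := by
  have hp : ∀ p : F[X], evalTrans (transcendental_of_root h)
      (evalTrans hf (algebraMap F[X] (RatFunc F) p)) =
      algebraMap (RatFunc F) L (algebraMap F[X] (RatFunc F) p) := by
    intro p
    rw [evalTrans_algebraMap, ← aeval_algHom_apply, evalTrans_algebraMap, h,
      aeval_algebraMap_apply]
    congr 1
    rw [← RatFunc.algebraMap_X, aeval_algebraMap_apply, aeval_X_left_apply]
  induction r using RatFunc.induction_on with
  | f p q hq => simp only [map_div₀, hp]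

theorem transcendental_algebraMap_of_natDegree_pos {f : F[X]} (hf : 0 < f.natDegree) :
    Transcendental F (algebraMap F[X] (RatFunc F) f) := by
  intro h
  have h1 : IsAlgebraic F f :=
    (isAlgebraic_algebraMap_iff (RatFunc.algebraMap_injective F)).mp h
  obtain ⟨p, hp0, hp⟩ := h1
  rw [← comp_eq_aeval] at hp
  rcases comp_eq_zero_iff.mp hp with h2 | ⟨-, h2⟩
  · exact hp0 h2
  · rw [h2, natDegree_C] at hf
    exact lt_irrefl _ hf

/-- Any two roots of `f - t` are conjugate over `F(t)`. -/
theorem minpoly_eq_of_root {f : F[X]} (hf : 0 < f.natDegree) {α β : L}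
    (hα : aeval α f = algebraMap (RatFunc F) L RatFunc.X)
    (hβ : aeval β f = algebraMap (RatFunc F) L RatFunc.X)
    (hint : IsIntegral (RatFunc F) α) :
    minpoly (RatFunc F) α = minpoly (RatFunc F) β := by
  have hft := transcendental_algebraMap_of_natDegree_pos hf
  -- `p(γ)` is the value at `γ` of a rational function that does not depend on the root `γ`.
  have key : ∀ {γ : L} (hγ : aeval γ f = algebraMap (RatFunc F) L RatFunc.X)
      (p : (RatFunc F)[X]), aeval γ p = evalTrans (transcendental_of_root hγ)
        (eval₂ (evalTrans hft : RatFunc F →+* RatFunc F) RatFunc.X p) := by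
    intro γ hγ p
    have hX : evalTrans (transcendental_of_root hγ) RatFunc.X = γ := by
      rw [← RatFunc.algebraMap_X, evalTrans_algebraMap, aeval_X]
    have hc : (evalTrans (transcendental_of_root hγ) : RatFunc F →+* L).comp
        (evalTrans hft : RatFunc F →+* RatFunc F) = algebraMap (RatFunc F) L :=
      RingHom.ext (evalTrans_comp hγ hft)
    have he := hom_eval₂ p (evalTrans hft : RatFunc F →+* RatFunc F)
      (evalTrans (transcendental_of_root hγ) : RatFunc F →+* L) RatFunc.X
    rw [hc, RingHom.coe_coe, hX] at he
    exact he.symm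
  refine minpoly.eq_of_irreducible_of_monic (minpoly.irreducible hint) ?_ (minpoly.monic hint)
  have h1 := minpoly.aeval (RatFunc F) α
  rw [key hα, map_eq_zero] at h1
  rw [key hβ, h1, map_zero]

theorem exists_degree_one_of_mem_adjoin {f : F[X]} (hf : 0 < f.natDegree) {α β : L}
    (hα : aeval α f = algebraMap (RatFunc F) L RatFunc.X)
    (hβ : aeval β f = algebraMap (RatFunc F) L RatFunc.X)
    (hmem : β ∈ IntermediateField.adjoin (RatFunc F) {α}) :
    ∃ ℓ : F[X], (ℓ.degree = 1 ∧ f.comp ℓ = f) ∧ aeval α ℓ = β := by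
  have hft := transcendental_algebraMap_of_natDegree_pos hf
  have hαt := transcendental_of_root hα
  let K : IntermediateField (RatFunc F) L :=
    { (evalTrans hαt : RatFunc F →+* L).fieldRange with
      algebraMap_mem' := fun r => ⟨evalTrans hft r, evalTrans_comp hα hft r⟩ }
  have hK : IntermediateField.adjoin (RatFunc F) {α} ≤ K := by
    rw [IntermediateField.adjoin_simple_le_iff]
    exact ⟨RatFunc.X, by simp [← RatFunc.algebraMap_X, evalTrans_algebraMap]⟩
  obtain ⟨r, hr⟩ := hK hmem
  replace hr : evalTrans hαt r = β := hr
  have hfr : aeval r f = algebraMap F[X] (RatFunc F) f := by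
    have hinj : Function.Injective (evalTrans hαt) := RingHom.injective _
    apply hinj
    rw [← aeval_algHom_apply, hr, evalTrans_algebraMap, hα, hβ]
  -- `r` is a root of the polynomial `f(Y) - f(x)` in `Y`, whose leading coefficient is a unit.
  have hint : IsIntegral F[X] r := by
    have h1 : IsIntegral F[X] (aeval r f) := hfr ▸ isIntegral_algebraMap
    have h2 : IsIntegral F[X] (aeval r (f * C f.leadingCoeff⁻¹)) := by
      rw [map_mul, aeval_C, IsScalarTower.algebraMap_apply F F[X] (RatFunc F)]
      exact h1.mul isIntegral_algebraMap
    have hm : (f * C f.leadingCoeff⁻¹).Monic :=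
      monic_mul_leadingCoeff_inv (ne_zero_of_natDegree_gt hf)
    rw [← aeval_map_algebraMap F[X]] at h2
    refine IsIntegral.of_aeval_monic (hm.map _) ?_ h2
    rw [hm.natDegree_map, natDegree_mul_C (inv_ne_zero
      (leadingCoeff_ne_zero.mpr (ne_zero_of_natDegree_gt hf)))]
    exact hf.ne'
  obtain ⟨p, rfl⟩ := IsIntegrallyClosed.isIntegral_iff.mp hint
  have hcomp : f.comp p = f := by
    apply RatFunc.algebraMap_injective F
    rw [← hfr, aeval_algebraMap_apply, comp_eq_aeval]
  refine ⟨p, ⟨?_, hcomp⟩, by rw [← hr, evalTrans_algebraMap]⟩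
  have hd := congrArg natDegree hcomp
  rw [natDegree_comp] at hd
  have hd1 : p.natDegree = 1 := Nat.eq_of_mul_eq_mul_left hf (by rw [hd, mul_one])
  exact (degree_eq_iff_natDegree_eq_of_pos one_pos).mpr hd1

/-- The functional inverse of a degree-one `ℓ` with `f ∘ ℓ = f` has the same two properties. -/
theorem inverse_mem {f ℓ : F[X]} (h : ℓ.degree = 1 ∧ f.comp ℓ = f) :
    (C (ℓ.coeff 1)⁻¹ * X - C ((ℓ.coeff 1)⁻¹ * ℓ.coeff 0)).degree = 1 ∧
      f.comp (C (ℓ.coeff 1)⁻¹ * X - C ((ℓ.coeff 1)⁻¹ * ℓ.coeff 0)) = f := by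
  obtain ⟨hd, hc⟩ := h
  have ha : ℓ.coeff 1 ≠ 0 := coeff_ne_zero_of_eq_degree hd
  have hl : ℓ = C (ℓ.coeff 1) * X + C (ℓ.coeff 0) := eq_X_add_C_of_degree_le_one hd.le
  have hinv : ℓ.comp (C (ℓ.coeff 1)⁻¹ * X - C ((ℓ.coeff 1)⁻¹ * ℓ.coeff 0)) = X := by
    generalize ℓ.coeff 1 = a at *
    generalize ℓ.coeff 0 = b at *
    subst hl
    have hC : C a * C a⁻¹ = (1 : F[X]) := by rw [← C_mul, mul_inv_cancel₀ ha, C_1]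
    simp only [add_comp, mul_comp, C_comp, X_comp, C_mul]
    linear_combination (X - C b) * hC
  constructor
  · rw [sub_eq_add_neg, ← C_neg]
    exact degree_linear (inv_ne_zero ha)
  · conv_lhs => rw [← hc]
    rw [comp_assoc, hinv, comp_X]

end Helpers

/-- **Lemma.** Let `φ = f − t`, `L` its splitting field over `F(t)`,
`G = Gal(L/F(t))`, `α` a root of `φ`, `B_α` the set of roots of `φ` lying in `F(α)`,
and `H` the group of degree-one `ℓ ∈ F[x]` with `f ∘ ℓ = f`.  Then
`B_α = {ℓ(α) : ℓ ∈ H}` and the map `Φ : G_{B_α} → H`, `σ ↦ ℓ⁻¹` where `ℓ ∈ H` is the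
unique element with `σ(α) = ℓ(α)`, is a surjective group homomorphism with kernel `G_α`.
(The homomorphism property is expressed by: if `σ(α) = ℓ_σ(α)` and `τ(α) = ℓ_τ(α)`
then `(στ)(α) = (ℓ_τ ∘ ℓ_σ)(α)`; surjectivity by: every `ℓ ∈ H` is `Φ(σ)` for some
`σ ∈ G_{B_α}`, i.e. `σ(α) = ℓ⁻¹(α)`; and the kernel condition by: `Φ(σ) = x ↔ σ(α) = α`.) -/
theorem setwise_stabilizer_hom_onto_linear_group
    {F : Type*} [Field F] (f : F[X]) (hf : 0 < f.natDegree) (hf' : derivative f ≠ 0)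
    (α : (polyPhi f).SplittingField) (hα : aeval α (polyPhi f) = 0)
    (Bα : Set (polyPhi f).SplittingField)
    (hBα : Bα = {x | x ∈ (polyPhi f).rootSet (polyPhi f).SplittingField ∧
      x ∈ IntermediateField.adjoin (RatFunc F) {α}})
    (H : Set F[X]) (hH : H = {ℓ : F[X] | ℓ.degree = 1 ∧ f.comp ℓ = f}) :
    -- B_α = {ℓ(α) : ℓ ∈ H}
    (Bα = (fun ℓ : F[X] => aeval α ℓ) '' H) ∧
    -- Φ is well defined: for σ ∈ G_{B_α} there is a unique ℓ ∈ H with σ(α) = ℓ(α)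
    (∀ σ : (polyPhi f).SplittingField ≃ₐ[RatFunc F] (polyPhi f).SplittingField,
      ⇑σ '' Bα = Bα → ∃! ℓ : F[X], ℓ ∈ H ∧ σ α = aeval α ℓ) ∧
    -- Φ is a homomorphism
    (∀ σ τ : (polyPhi f).SplittingField ≃ₐ[RatFunc F] (polyPhi f).SplittingField,
      ⇑σ '' Bα = Bα → ⇑τ '' Bα = Bα →
      ∀ ℓσ ∈ H, ∀ ℓτ ∈ H, σ α = aeval α ℓσ → τ α = aeval α ℓτ →
        (σ * τ) α = aeval α (ℓτ.comp ℓσ)) ∧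
    -- Φ is surjective
    (∀ ℓ ∈ H, ∃ σ : (polyPhi f).SplittingField ≃ₐ[RatFunc F] (polyPhi f).SplittingField,
      ⇑σ '' Bα = Bα ∧
      σ α = aeval α (C (ℓ.coeff 1)⁻¹ * X - C ((ℓ.coeff 1)⁻¹ * ℓ.coeff 0))) ∧
    -- the kernel of Φ is G_α
    (∀ σ : (polyPhi f).SplittingField ≃ₐ[RatFunc F] (polyPhi f).SplittingField,
      ⇑σ '' Bα = Bα → ∀ ℓ ∈ H, σ α = aeval α ℓ → (ℓ = X ↔ σ α = α)) := by
  have hα' := (aeval_polyPhi_eq_zero_iff f α).mp hα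
  have hinj : Function.Injective (aeval α : F[X] →ₐ[F] (polyPhi f).SplittingField) :=
    transcendental_iff_injective.mp (transcendental_of_root hα')
  have hφ : polyPhi f ≠ 0 := by
    intro h0
    -- If `φ` were zero, then `0` would be a root, and `t = f(0)` would lie in `F`.
    have h1 : aeval (0 : (polyPhi f).SplittingField) (polyPhi f) = 0 := by rw [h0, map_zero]
    exact transcendental_of_root ((aeval_polyPhi_eq_zero_iff f _).mp h1) isAlgebraic_zero
  have hcomp : ∀ ℓ ∈ H, aeval (aeval α ℓ) f = algebraMap (RatFunc F) _ RatFunc.X := by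
    intro ℓ hℓ
    rw [hH] at hℓ
    rw [← aeval_comp, hℓ.2, hα']
  have hB : Bα = (fun ℓ : F[X] => aeval α ℓ) '' H := by
    ext β
    constructor
    · intro hβ
      rw [hBα] at hβ
      obtain ⟨ℓ, hℓ, h⟩ := exists_degree_one_of_mem_adjoin hf hα'
        ((aeval_polyPhi_eq_zero_iff f β).mp (mem_rootSet.mp hβ.1).2) hβ.2
      exact ⟨ℓ, hH ▸ hℓ, h⟩
    · rintro ⟨ℓ, hℓ, rfl⟩
      rw [hBα]
      refine ⟨mem_rootSet.mpr ⟨hφ, (aeval_polyPhi_eq_zero_iff f _).mpr (hcomp ℓ hℓ)⟩, ?_⟩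
      change aeval α ℓ ∈ _
      rw [← aeval_map_algebraMap (RatFunc F)]
      exact IntermediateField.algebra_adjoin_le_adjoin _ _ (aeval_mem_adjoin_singleton _ α)
  have hfin : Bα.Finite := by
    rw [hBα]
    exact (rootSet_finite _ _).subset fun x hx => hx.1
  have hσ : ∀ (σ : (polyPhi f).SplittingField ≃ₐ[RatFunc F] (polyPhi f).SplittingField)
      (ℓ : F[X]), σ (aeval α ℓ) = aeval (σ α) ℓ := fun σ ℓ => by
    simpa using (aeval_algHom_apply (σ.toAlgHom.restrictScalars F) α ℓ).symm
  have hXH : X ∈ H := by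
    rw [hH]
    exact ⟨degree_X, comp_X⟩
  refine ⟨hB, ?_, ?_, ?_, ?_⟩
  · intro σ hσB
    have hmem : σ α ∈ Bα := by
      rw [← hσB]
      exact ⟨α, hB ▸ ⟨X, hXH, aeval_X α⟩, rfl⟩
    rw [hB] at hmem
    obtain ⟨ℓ, hℓ, h⟩ := hmem
    exact ⟨ℓ, ⟨hℓ, h.symm⟩, fun m hm => hinj (hm.2.symm.trans h.symm)⟩
  · intro σ τ _ _ ℓσ _ ℓτ _ h1 h2
    rw [AlgEquiv.mul_apply, h2, hσ, h1, aeval_comp]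
  · intro ℓ hℓ
    have hm : C (ℓ.coeff 1)⁻¹ * X - C ((ℓ.coeff 1)⁻¹ * ℓ.coeff 0) ∈ H := by
      rw [hH] at hℓ ⊢
      exact inverse_mem hℓ
    generalize C (ℓ.coeff 1)⁻¹ * X - C ((ℓ.coeff 1)⁻¹ * ℓ.coeff 0) = m at hm ⊢
    have hmp := minpoly_eq_of_root hf hα' (hcomp m hm) (Algebra.IsIntegral.isIntegral α)
    obtain ⟨σ, hs⟩ := (Normal.minpoly_eq_iff_mem_orbit _).mp hmp.symm
    replace hs : σ α = aeval α m := hs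
    refine ⟨σ, ?_, hs⟩
    -- `σ` is injective and `Bα` is finite, so one inclusion suffices.
    refine Set.eq_of_subset_of_ncard_le ?_ (Set.ncard_image_of_injective _ σ.injective).ge hfin
    rintro _ ⟨x, hx, rfl⟩
    rw [hB] at hx ⊢
    obtain ⟨k, hk, rfl⟩ := hx
    refine ⟨k.comp m, ?_, ?_⟩
    · rw [hH] at hk hm ⊢
      refine ⟨(degree_eq_iff_natDegree_eq_of_pos one_pos).mpr ?_,
        by rw [← comp_assoc, hk.2, hm.2]⟩
      rw [natDegree_comp,
        natDegree_eq_of_degree_eq_some hk.1, natDegree_eq_of_degree_eq_some hm.1]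
      rfl
    · change aeval α (k.comp m) = σ (aeval α k)
      rw [hσ, hs, aeval_comp]
  · intro σ _ ℓ _ h
    rw [h]
    constructor
    · rintro rfl
      exact aeval_X α
    · intro h1
      exact hinj (h1.trans (aeval_X α).symm)
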